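/- arXiv:1810.04812 — 5 statements merged into one kernel-verified Lean document; each statement's English description precedes it below -/
import Mathlib

section
/- Let R be a commutative semiring that is strict and has no zero divisors. Then either the polynomial T^2 + T + 1 is irreducible in R[T], or there exists a unit a of R such that a + a⁻¹ = 1; and in the latter case one has the factorization T^2 + T + 1 = (T + a)(T + a⁻¹) in R[T]. -/
open Polynomial

/-- Over a strict commutative semiring without zero divisors, either
`T ^ 2 + T + 1` is irreducible, or there is a unit `a` with `a + a⁻¹ = 1`, in
which case `T ^ 2 + T + 1 = (T + a) * (T + a⁻¹)`. -/
theorem irreducible_or_factor_quadratic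
    (R : Type*) [CommSemiring R]
    (hstrict : ∀ a b : R, a + b = 0 → a = 0 ∧ b = 0)
    (hnzd : ∀ a b : R, a * b = 0 → a = 0 ∨ b = 0) :
    Irreducible ((X : R[X]) ^ 2 + X + 1) ∨
      ∃ a : Rˣ, (a : R) + ((a⁻¹ : Rˣ) : R) = 1 ∧
        (X : R[X]) ^ 2 + X + 1 = (X + C (a : R)) * (X + C ((a⁻¹ : Rˣ) : R)) := by
  rcases subsingleton_or_nontrivial R with hs | hn
  · exact Or.inr ⟨1, Subsingleton.elim _ _, Subsingleton.elim _ _⟩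
  haveI : NoZeroDivisors R := ⟨fun {a b} h => hnzd a b h⟩
  have hfac : ∀ a : Rˣ, (a : R) + ((a⁻¹ : Rˣ) : R) = 1 →
      (X : R[X]) ^ 2 + X + 1 = (X + C (a : R)) * (X + C ((a⁻¹ : Rˣ) : R)) := by
    intro a ha
    have h1 : C (a : R) + C ((a⁻¹ : Rˣ) : R) = 1 := by rw [← C_add, ha, C_1]
    have h2 : C (a : R) * C ((a⁻¹ : Rˣ) : R) = 1 := by rw [← C_mul, Units.mul_inv, C_1]
    calc (X : R[X]) ^ 2 + X + 1
        = X ^ 2 + (C (a : R) + C ((a⁻¹ : Rˣ) : R)) * X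
          + C (a : R) * C ((a⁻¹ : Rˣ) : R) := by rw [h1, h2, one_mul]
      _ = _ := by ring
  have hdeg : ((X : R[X]) ^ 2 + X + 1).natDegree = 2 := by compute_degree!
  have hc0 : ((X : R[X]) ^ 2 + X + 1).coeff 0 = 1 := by simp
  have hc1 : ((X : R[X]) ^ 2 + X + 1).coeff 1 = 1 := by simp [coeff_X_pow, coeff_one]
  have hc2 : ((X : R[X]) ^ 2 + X + 1).coeff 2 = 1 := by simp [coeff_X, coeff_one]
  generalize hp : (X : R[X]) ^ 2 + X + 1 = p at *
  have hp0 : p ≠ 0 := by rintro rfl; simp at hdeg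
  by_cases hex : ∃ a : Rˣ, (a : R) + ((a⁻¹ : Rˣ) : R) = 1
  · obtain ⟨a, ha⟩ := hex
    exact Or.inr ⟨a, ha, hfac a ha⟩
  left
  have key : ∀ g h : R[X], p = g * h → g.natDegree = 0 → IsUnit g := by
    intro g h e hg
    rw [eq_C_of_natDegree_eq_zero hg] at e ⊢
    rw [e, coeff_C_mul] at hc0
    exact (IsUnit.of_mul_eq_one _ hc0).map C
  refine ⟨fun hu => ?_, fun g h e => ?_⟩
  · obtain ⟨q, hq⟩ := hu.exists_right_inv
    have hq0 : q ≠ 0 := by rintro rfl; simp at hq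
    have := natDegree_mul hp0 hq0
    rw [hq, natDegree_one] at this
    omega
  · have hg0 : g ≠ 0 := by rintro rfl; simp at e; exact hp0 e
    have hh0 : h ≠ 0 := by rintro rfl; simp at e; exact hp0 e
    have hd := natDegree_mul hg0 hh0
    rw [← e, hdeg] at hd
    by_cases h1 : g.natDegree = 0
    · exact Or.inl (key g h e h1)
    by_cases h2 : h.natDegree = 0
    · exact Or.inr (key h g (by rw [e, mul_comm]) h2)
    exfalso
    apply hex
    have hg1 : g.natDegree ≤ 1 := by omega
    have hh1 : h.natDegree ≤ 1 := by omega
    have hg2 : g.coeff 2 = 0 := coeff_eq_zero_of_natDegree_lt (by omega)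
    have hh2 : h.coeff 2 = 0 := coeff_eq_zero_of_natDegree_lt (by omega)
    rw [e, coeff_mul] at hc0 hc1 hc2
    simp [Finset.Nat.antidiagonal_succ, hg2, hh2] at hc0 hc1 hc2
    have hm : (g.coeff 0 * h.coeff 1) * (g.coeff 1 * h.coeff 0) = 1 := by
      calc _ = (g.coeff 0 * h.coeff 0) * (g.coeff 1 * h.coeff 1) := by ring
        _ = 1 := by rw [hc0, hc2, one_mul]
    exact ⟨⟨_, _, hm, by rw [mul_comm, hm]⟩, hc1⟩
end

section
/- Let R be a commutative semiring that is strict and has no zero divisors. Then either the polynomial T^4 + T^2 + 1 is irreducible in R[T], or there exists a unit a of R such that a + a⁻¹ = 1; and in the latter case one has the factorization T^4 + T^2 + 1 = (T^2 + a)(T^2 + a⁻¹) in R[T]. -/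
open Polynomial

/-- Over a strict commutative semiring without zero divisors, either
`T ^ 4 + T ^ 2 + 1` is irreducible, or there is a unit `a` with `a + a⁻¹ = 1`,
in which case `T ^ 4 + T ^ 2 + 1 = (T ^ 2 + a) * (T ^ 2 + a⁻¹)`. -/
theorem irreducible_or_factor_quartic
    (R : Type*) [CommSemiring R]
    (hstrict : ∀ a b : R, a + b = 0 → a = 0 ∧ b = 0)
    (hnzd : ∀ a b : R, a * b = 0 → a = 0 ∨ b = 0) :
    Irreducible ((X : R[X]) ^ 4 + X ^ 2 + 1) ∨
      ∃ a : Rˣ, (a : R) + ((a⁻¹ : Rˣ) : R) = 1 ∧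
        (X : R[X]) ^ 4 + X ^ 2 + 1 =
          (X ^ 2 + C (a : R)) * (X ^ 2 + C ((a⁻¹ : Rˣ) : R)) := by
  rcases subsingleton_or_nontrivial R with hs | hn
  · exact Or.inr ⟨1, Subsingleton.elim _ _, Subsingleton.elim _ _⟩
  haveI : NoZeroDivisors R := ⟨fun {a b} h => hnzd a b h⟩
  have hdeg : ((X : R[X]) ^ 4 + X ^ 2 + 1).natDegree = 4 := by compute_degree!
  have hne : (X : R[X]) ^ 4 + X ^ 2 + 1 ≠ 0 := by
    intro h
    rw [h] at hdeg
    simp at hdeg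
  by_cases hex : ∃ a : Rˣ, (a : R) + ((a⁻¹ : Rˣ) : R) = 1
  · right
    obtain ⟨a, ha⟩ := hex
    refine ⟨a, ha, ?_⟩
    have h1 : (C (a : R)) + C ((a⁻¹ : Rˣ) : R) = 1 := by rw [← C_add, ha, C_1]
    have h2 : (C (a : R)) * C ((a⁻¹ : Rˣ) : R) = 1 := by rw [← C_mul, Units.mul_inv, C_1]
    calc (X : R[X]) ^ 4 + X ^ 2 + 1
        = X ^ 4 + X ^ 2 * (C (a : R) + C ((a⁻¹ : Rˣ) : R))
            + C (a : R) * C ((a⁻¹ : Rˣ) : R) := by rw [h1, h2, mul_one]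
      _ = _ := by ring
  left
  refine ⟨?_, ?_⟩
  · intro hu
    obtain ⟨q, hq⟩ := hu.exists_right_inv
    have hq0 : q ≠ 0 := by
      rintro rfl
      simp at hq
    have := congrArg natDegree hq
    rw [natDegree_mul hne hq0, hdeg, natDegree_one] at this
    omega
  intro f g hfg
  have hf : f ≠ 0 := by
    rintro rfl
    simp [hne] at hfg
  have hg : g ≠ 0 := by
    rintro rfl
    simp [hne] at hfg
  have hd : f.natDegree + g.natDegree = 4 := by
    rw [← natDegree_mul hf hg, ← hfg, hdeg]
  have c0 := congrArg (fun p => coeff p 0) hfg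
  have c1 := congrArg (fun p => coeff p 1) hfg
  have c2 := congrArg (fun p => coeff p 2) hfg
  have c3 := congrArg (fun p => coeff p 3) hfg
  simp [coeff_mul, Finset.Nat.antidiagonal_succ, coeff_one, coeff_X_pow] at c0 c1 c2 c3
  have hf0 : f.coeff 0 ≠ 0 := fun h => by simp [h] at c0
  have hg0 : g.coeff 0 ≠ 0 := fun h => by simp [h] at c0
  have lf : f.coeff f.natDegree ≠ 0 := by simpa using hf
  have lg : g.coeff g.natDegree ≠ 0 := by simpa using hg
  have key : ∀ a b : R, 0 = a + b → a = 0 ∧ b = 0 := fun a b h => hstrict a b h.symm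
  have z1 : f.coeff 1 = 0 ∧ g.coeff 1 = 0 := by
    obtain ⟨h1, h2⟩ := key _ _ c1
    exact ⟨(hnzd _ _ h2).resolve_right hg0, (hnzd _ _ h1).resolve_left hf0⟩
  have unitC : ∀ p : R[X], p.natDegree = 0 → IsUnit (p.coeff 0) → IsUnit p := by
    intro p hp hu
    rw [eq_C_of_natDegree_eq_zero hp]
    exact hu.map C
  have z3 : f.coeff 3 = 0 ∧ g.coeff 3 = 0 := by
    rw [z1.1, z1.2] at c3
    simp only [mul_zero, zero_mul, zero_add, add_zero] at c3
    obtain ⟨h1, h2⟩ := key _ _ c3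
    exact ⟨(hnzd _ _ h2).resolve_right hg0, (hnzd _ _ h1).resolve_left hf0⟩
  have hle : f.natDegree ≤ 4 := by omega
  obtain h | h | h | h | h : f.natDegree = 0 ∨ f.natDegree = 1 ∨ f.natDegree = 2 ∨
    f.natDegree = 3 ∨ f.natDegree = 4 := by omega
  · exact Or.inl (unitC f h (IsUnit.of_mul_eq_one _ c0.symm))
  · rw [h] at lf; exact absurd z1.1 lf
  · exfalso
    have h' : g.natDegree = 2 := by omega
    have c4 : f.coeff 2 * g.coeff 2 = 1 := by
      have := coeff_mul_degree_add_degree f g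
      rw [leadingCoeff, leadingCoeff, h, h', ← hfg] at this
      rw [← this]
      simp [coeff_one, coeff_X_pow]
    rw [z1.1] at c2
    simp only [zero_mul, zero_add] at c2
    have e : (f.coeff 0 * g.coeff 2) * (f.coeff 2 * g.coeff 0) = 1 := by
      calc _ = (f.coeff 0 * g.coeff 0) * (f.coeff 2 * g.coeff 2) := by ring
        _ = 1 := by rw [c4, ← c0, mul_one]
    exact hex ⟨⟨_, _, e, by rw [mul_comm, e]⟩, c2.symm⟩
  · rw [h] at lf; exact absurd z3.1 lf
  · exact Or.inr (unitC g (by omega) (IsUnit.of_mul_eq_one _ (by rw [mul_comm]; exact c0.symm)))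
end

section
/- Let R be a commutative semiring that is strict and has no zero divisors, and suppose there is no unit a of R with a + a⁻¹ = 1. Then the identity (T + 1)(T^4 + T^2 + 1) = (T^3 + 1)(T^2 + T + 1) holds in R[T] and all four polynomials T + 1, T^4 + T^2 + 1, T^3 + 1, T^2 + T + 1 are irreducible in R[T]; in particular T^5 + T^4 + T^3 + T^2 + T + 1 has two factorizations into irreducibles whose multisets of degrees {1,4} and {3,2} are different. -/
open Polynomial

theorem aux_irr {R : Type*} [CommSemiring R] [Nontrivial R] [NoZeroDivisors R]
    (f : R[X]) (hf : f.Monic) (h0 : 0 < f.natDegree)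
    (H : ∀ p q : R[X], p * q = f → 1 ≤ p.natDegree → p.natDegree ≤ q.natDegree →
      p.natDegree + q.natDegree = f.natDegree →
      p.coeff p.natDegree * q.coeff q.natDegree = 1 → False) : Irreducible f := by
  have key : ∀ p q : R[X], p * q = f → p.natDegree ≤ q.natDegree → IsUnit p := by
    intro p q h hle
    have hne : p * q ≠ 0 := by rw [h]; exact hf.ne_zero
    have hp : p ≠ 0 := left_ne_zero_of_mul hne
    have hq : q ≠ 0 := right_ne_zero_of_mul hne
    have hdeg : p.natDegree + q.natDegree = f.natDegree := by
      rw [← h, natDegree_mul hp hq]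
    have hlc : p.coeff p.natDegree * q.coeff q.natDegree = 1 := by
      have := leadingCoeff_mul p q
      rw [h, hf.leadingCoeff] at this
      exact this.symm
    rcases Nat.eq_zero_or_pos p.natDegree with h1 | h1
    · rw [eq_C_of_natDegree_eq_zero h1]
      rw [h1] at hlc
      exact (IsUnit.of_mul_eq_one _ hlc).map C
    · exact (H p q h h1 hle hdeg hlc).elim
  refine ⟨fun hu => ?_, fun p q h => ?_⟩
  · have := natDegree_eq_zero_of_isUnit hu
    omega
  · rcases le_total p.natDegree q.natDegree with h1 | h1
    · exact Or.inl (key p q h.symm h1)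
    · exact Or.inr (key q p (by rw [mul_comm, h]) h1)

theorem aux_no {R : Type*} [CommSemiring R]
    (hno : ¬ ∃ a : Rˣ, (a : R) + ((a⁻¹ : Rˣ) : R) = 1) (a b c d : R)
    (h1 : a * c = 1) (h2 : b * d = 1) (h3 : a * d + b * c = 1) : False :=
  hno ⟨⟨a * d, b * c, by rw [show a * d * (b * c) = (a * c) * (b * d) by ring, h1, h2, one_mul],
    by rw [show b * c * (a * d) = (a * c) * (b * d) by ring, h1, h2, one_mul]⟩, h3⟩

theorem aux_no0 {R : Type*} [CommSemiring R] [Nontrivial R] (a b c d : R)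
    (h1 : a * c = 1) (h2 : b * d = 1) (h3 : b * c = 0) : False := by
  have : a * c * (b * d) = 0 := by
    rw [show a * c * (b * d) = (b * c) * (a * d) by ring, h3, zero_mul]
  rw [h1, h2, one_mul] at this
  exact one_ne_zero this

/-- Over a strict commutative semiring without zero divisors in which no unit
`a` satisfies `a + a⁻¹ = 1`, the identity
`(T + 1)(T⁴ + T² + 1) = (T³ + 1)(T² + T + 1)` holds, all four factors are
irreducible, and hence `T⁵ + T⁴ + T³ + T² + T + 1` has two factorizations into
irreducibles with different multisets of degrees `{1, 4}` and `{3, 2}`. -/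
theorem two_factorizations_of_no_unit_sum_one
    (R : Type*) [CommSemiring R]
    (hstrict : ∀ a b : R, a + b = 0 → a = 0 ∧ b = 0)
    (hnzd : ∀ a b : R, a * b = 0 → a = 0 ∨ b = 0)
    (hno : ¬ ∃ a : Rˣ, (a : R) + ((a⁻¹ : Rˣ) : R) = 1) :
    ((X : R[X]) + 1) * (X ^ 4 + X ^ 2 + 1) = (X ^ 3 + 1) * (X ^ 2 + X + 1) ∧
    Irreducible ((X : R[X]) + 1) ∧
    Irreducible ((X : R[X]) ^ 4 + X ^ 2 + 1) ∧
    Irreducible ((X : R[X]) ^ 3 + 1) ∧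
    Irreducible ((X : R[X]) ^ 2 + X + 1) ∧
    ∃ l₁ l₂ : List R[X],
      (∀ p ∈ l₁, Irreducible p) ∧ (∀ p ∈ l₂, Irreducible p) ∧
      l₁.prod = (X : R[X]) ^ 5 + X ^ 4 + X ^ 3 + X ^ 2 + X + 1 ∧
      l₂.prod = (X : R[X]) ^ 5 + X ^ 4 + X ^ 3 + X ^ 2 + X + 1 ∧
      (↑(l₁.map Polynomial.natDegree) : Multiset ℕ) = {1, 4} ∧
      (↑(l₂.map Polynomial.natDegree) : Multiset ℕ) = {3, 2} ∧
      ({1, 4} : Multiset ℕ) ≠ {3, 2} := by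
  have hnt : Nontrivial R := by
    by_contra hn
    rw [not_nontrivial_iff_subsingleton] at hn
    exact hno ⟨1, Subsingleton.elim _ _⟩
  have hz : NoZeroDivisors R := ⟨fun {a b} h => hnzd a b h⟩
  have d1 : ((X : R[X]) + 1).natDegree = 1 := by compute_degree!
  have d4 : ((X : R[X]) ^ 4 + X ^ 2 + 1).natDegree = 4 := by compute_degree!
  have d3 : ((X : R[X]) ^ 3 + 1).natDegree = 3 := by compute_degree!
  have d2 : ((X : R[X]) ^ 2 + X + 1).natDegree = 2 := by compute_degree!
  have m1 : ((X : R[X]) + 1).Monic := by monicity!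
  have m4 : ((X : R[X]) ^ 4 + X ^ 2 + 1).Monic := by monicity!
  have m3 : ((X : R[X]) ^ 3 + 1).Monic := by monicity!
  have m2 : ((X : R[X]) ^ 2 + X + 1).Monic := by monicity!
  have i1 : Irreducible ((X : R[X]) + 1) := by
    refine aux_irr _ m1 (by omega) ?_
    intro p q h h1 hle hd hl
    omega
  have i2 : Irreducible ((X : R[X]) ^ 2 + X + 1) := by
    refine aux_irr _ m2 (by omega) ?_
    intro p q h h1 hle hd hl
    have hp : p.natDegree = 1 := by omega
    have hq : q.natDegree = 1 := by omega
    rw [hp, hq] at hl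
    have c0 := congrArg (fun r => coeff r 0) h
    have c1 := congrArg (fun r => coeff r 1) h
    simp [coeff_mul, Finset.Nat.sum_antidiagonal_eq_sum_range_succ_mk, Finset.sum_range_succ,
      coeff_X, coeff_one, coeff_X_pow] at c0 c1
    exact aux_no hno (p.coeff 1) (p.coeff 0) (q.coeff 1) (q.coeff 0) hl c0 (by rw [← c1]; ring)
  have i3 : Irreducible ((X : R[X]) ^ 3 + 1) := by
    refine aux_irr _ m3 (by omega) ?_
    intro p q h h1 hle hd hl
    have hp : p.natDegree = 1 := by omega
    have hq : q.natDegree = 2 := by omega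
    rw [hp, hq] at hl
    have p2 : p.coeff 2 = 0 := coeff_eq_zero_of_natDegree_lt (by omega)
    have c0 := congrArg (fun r => coeff r 0) h
    have c2 := congrArg (fun r => coeff r 2) h
    simp [coeff_mul, Finset.Nat.sum_antidiagonal_eq_sum_range_succ_mk, Finset.sum_range_succ,
      coeff_X, coeff_one, coeff_X_pow, p2, -mul_eq_zero] at c0 c2
    exact aux_no0 (p.coeff 1) (p.coeff 0) (q.coeff 2) (q.coeff 0) hl c0 (hstrict _ _ c2).1
  have i4 : Irreducible ((X : R[X]) ^ 4 + X ^ 2 + 1) := by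
    refine aux_irr _ m4 (by omega) ?_
    intro p q h h1 hle hd hl
    have c0 := congrArg (fun r => coeff r 0) h
    have c2 := congrArg (fun r => coeff r 2) h
    have c3 := congrArg (fun r => coeff r 3) h
    have p3 : p.coeff 3 = 0 := coeff_eq_zero_of_natDegree_lt (by omega)
    have hpq : (p.natDegree = 1 ∧ q.natDegree = 3) ∨ (p.natDegree = 2 ∧ q.natDegree = 2) := by
      omega
    rcases hpq with ⟨hp, hq⟩ | ⟨hp, hq⟩
    · rw [hp, hq] at hl
      have p2 : p.coeff 2 = 0 := coeff_eq_zero_of_natDegree_lt (by omega)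
      simp [coeff_mul, Finset.Nat.sum_antidiagonal_eq_sum_range_succ_mk, Finset.sum_range_succ,
        coeff_X, coeff_one, coeff_X_pow, p2, p3, -mul_eq_zero] at c0 c3
      exact aux_no0 (p.coeff 1) (p.coeff 0) (q.coeff 3) (q.coeff 0) hl c0 (hstrict _ _ c3).1
    · rw [hp, hq] at hl
      have q3 : q.coeff 3 = 0 := coeff_eq_zero_of_natDegree_lt (by omega)
      simp [coeff_mul, Finset.Nat.sum_antidiagonal_eq_sum_range_succ_mk, Finset.sum_range_succ,
        coeff_X, coeff_one, coeff_X_pow, p3, q3, -mul_eq_zero] at c0 c2 c3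
      have hb : p.coeff 1 = 0 := by
        rcases hnzd _ _ (hstrict _ _ c3).1 with h | h
        · exact h
        · rw [h, mul_zero] at hl
          exact (zero_ne_one hl).elim
      rw [hb, zero_mul, add_zero] at c2
      exact aux_no hno (p.coeff 2) (p.coeff 0) (q.coeff 2) (q.coeff 0) hl c0 (by rw [← c2]; ring)
  refine ⟨by ring, i1, i4, i3, i2, [X + 1, X ^ 4 + X ^ 2 + 1], [X ^ 3 + 1, X ^ 2 + X + 1],
    ?_, ?_, ?_, ?_, ?_, ?_, by decide⟩
  · intro p hp
    simp only [List.mem_cons, List.not_mem_nil, or_false] at hp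
    rcases hp with rfl | rfl <;> assumption
  · intro p hp
    simp only [List.mem_cons, List.not_mem_nil, or_false] at hp
    rcases hp with rfl | rfl <;> assumption
  · simp only [List.prod_cons, List.prod_nil]; ring
  · simp only [List.prod_cons, List.prod_nil]; ring
  · simp only [List.map_cons, List.map_nil, d1, d4]; rfl
  · simp only [List.map_cons, List.map_nil, d3, d2]; rfl
end

section
/- In the polynomial semiring over the nonnegative real numbers ℝ≥0, the identity (T + 1)(T^4 + T^2 + 1) = (T^3 + 1)(T^2 + T + 1) holds and all four polynomials T + 1, T^4 + T^2 + 1, T^3 + 1, T^2 + T + 1 are irreducible in ℝ≥0[T]; hence ℝ≥0[T] does not satisfy unique factorization, since the two factorizations consist of irreducibles with different multisets of degrees. -/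
open Polynomial NNReal

lemma aux_add_mul (a b : ℝ≥0) (h1 : a * b = 1) (h2 : a + b = 1) : False := by
  have h1' : (a : ℝ) * b = 1 := by exact_mod_cast h1
  have h2' : (a : ℝ) + b = 1 := by exact_mod_cast h2
  nlinarith [sq_nonneg ((a : ℝ) - b)]

lemma aux_coeff (f g p : ℝ≥0[X]) (h : f * g = p) :
    f.coeff 0 * g.coeff 0 = p.coeff 0 ∧
    f.coeff 0 * g.coeff 1 + f.coeff 1 * g.coeff 0 = p.coeff 1 ∧
    f.coeff 0 * g.coeff 2 + f.coeff 1 * g.coeff 1 + f.coeff 2 * g.coeff 0 = p.coeff 2 ∧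
    f.coeff 0 * g.coeff 3 + f.coeff 1 * g.coeff 2 + f.coeff 2 * g.coeff 1
      + f.coeff 3 * g.coeff 0 = p.coeff 3 := by
  subst h
  simp [coeff_mul, Finset.Nat.antidiagonal_succ, add_assoc]

lemma deg1 : ((X : ℝ≥0[X]) + 1).natDegree = 1 := by compute_degree!
lemma deg4 : ((X : ℝ≥0[X]) ^ 4 + X ^ 2 + 1).natDegree = 4 := by compute_degree!
lemma deg3 : ((X : ℝ≥0[X]) ^ 3 + 1).natDegree = 3 := by compute_degree!
lemma deg2 : ((X : ℝ≥0[X]) ^ 2 + X + 1).natDegree = 2 := by compute_degree!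

lemma ne_one_of_deg {p : ℝ≥0[X]} {n : ℕ} (h : p.natDegree = n) (hn : n ≠ 0) : p ≠ 1 := by
  rintro rfl
  simp at h
  exact hn h.symm

lemma aux_deg {f g p : ℝ≥0[X]} (hf : f.Monic) (hg : g.Monic) (h : f * g = p) :
    f.natDegree + g.natDegree = p.natDegree := by
  rw [← h, hf.natDegree_mul hg]

lemma irr1 : Irreducible ((X : ℝ≥0[X]) + 1) := by
  have hm : ((X : ℝ≥0[X]) + 1).Monic := by monicity!
  rw [hm.irreducible_iff_natDegree' ]
  refine ⟨ne_one_of_deg deg1 (by norm_num), fun f g hf hg h => ?_⟩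
  rw [deg1]
  simp

lemma irr2 : Irreducible ((X : ℝ≥0[X]) ^ 2 + X + 1) := by
  have hm : ((X : ℝ≥0[X]) ^ 2 + X + 1).Monic := by monicity!
  rw [hm.irreducible_iff_natDegree' ]
  refine ⟨ne_one_of_deg deg2 (by norm_num), fun f g hf hg h hd => ?_⟩
  have hs := aux_deg hf hg h
  rw [deg2] at hs hd
  rw [Finset.mem_Ioc] at hd
  have hgd : g.natDegree = 1 := by omega
  have hfd : f.natDegree = 1 := by omega
  have g1 : g.coeff 1 = 1 := by rw [← hgd]; exact hg.coeff_natDegree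
  have f1 : f.coeff 1 = 1 := by rw [← hfd]; exact hf.coeff_natDegree
  obtain ⟨h0, h1, -, -⟩ := aux_coeff f g _ h
  simp [coeff_X, coeff_one, coeff_X_pow, f1, g1] at h0 h1
  exact aux_add_mul _ _ h0 h1

lemma irr3 : Irreducible ((X : ℝ≥0[X]) ^ 3 + 1) := by
  have hm : ((X : ℝ≥0[X]) ^ 3 + 1).Monic := by monicity!
  rw [hm.irreducible_iff_natDegree' ]
  refine ⟨ne_one_of_deg deg3 (by norm_num), fun f g hf hg h hd => ?_⟩
  have hs := aux_deg hf hg h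
  rw [deg3] at hs hd
  rw [Finset.mem_Ioc] at hd
  have hgd : g.natDegree = 1 := by omega
  have g1 : g.coeff 1 = 1 := by rw [← hgd]; exact hg.coeff_natDegree
  obtain ⟨h0, h1, -, -⟩ := aux_coeff f g _ h
  simp [coeff_one, coeff_X_pow, g1] at h0 h1
  simp [h1.1] at h0

lemma irr4 : Irreducible ((X : ℝ≥0[X]) ^ 4 + X ^ 2 + 1) := by
  have hm : ((X : ℝ≥0[X]) ^ 4 + X ^ 2 + 1).Monic := by monicity!
  rw [hm.irreducible_iff_natDegree' ]
  refine ⟨ne_one_of_deg deg4 (by norm_num), fun f g hf hg h hd => ?_⟩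
  have hs := aux_deg hf hg h
  rw [deg4] at hs hd
  rw [Finset.mem_Ioc] at hd
  obtain ⟨h0, h1, h2, h3⟩ := aux_coeff f g _ h
  have hc : g.natDegree = 1 ∨ g.natDegree = 2 := by omega
  rcases hc with hgd | hgd
  · have g1 : g.coeff 1 = 1 := by rw [← hgd]; exact hg.coeff_natDegree
    simp [coeff_one, coeff_X_pow, g1] at h0 h1
    simp [h1.1] at h0
  · have hfd : f.natDegree = 2 := by omega
    have g2 : g.coeff 2 = 1 := by rw [← hgd]; exact hg.coeff_natDegree
    have f2 : f.coeff 2 = 1 := by rw [← hfd]; exact hf.coeff_natDegree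
    have g3 : g.coeff 3 = 0 := coeff_eq_zero_of_natDegree_lt (by omega)
    have f3 : f.coeff 3 = 0 := coeff_eq_zero_of_natDegree_lt (by omega)
    simp [coeff_one, coeff_X_pow, g2, f2, g3, f3] at h0 h2 h3
    simp [h3.1] at h2
    exact aux_add_mul _ _ h0 h2

/-- In `ℝ≥0[T]` the identity `(T + 1)(T⁴ + T² + 1) = (T³ + 1)(T² + T + 1)` holds
with all four factors irreducible; hence `ℝ≥0[T]` does not satisfy unique
factorization, the multisets of degrees `{1, 4}` and `{3, 2}` being different. -/
theorem nnreal_polynomial_not_UFD :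
    ((X : ℝ≥0[X]) + 1) * (X ^ 4 + X ^ 2 + 1) = (X ^ 3 + 1) * (X ^ 2 + X + 1) ∧
    Irreducible ((X : ℝ≥0[X]) + 1) ∧
    Irreducible ((X : ℝ≥0[X]) ^ 4 + X ^ 2 + 1) ∧
    Irreducible ((X : ℝ≥0[X]) ^ 3 + 1) ∧
    Irreducible ((X : ℝ≥0[X]) ^ 2 + X + 1) ∧
    ∃ l₁ l₂ : List ℝ≥0[X],
      (∀ p ∈ l₁, Irreducible p) ∧ (∀ p ∈ l₂, Irreducible p) ∧
      l₁.prod = (X : ℝ≥0[X]) ^ 5 + X ^ 4 + X ^ 3 + X ^ 2 + X + 1 ∧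
      l₂.prod = (X : ℝ≥0[X]) ^ 5 + X ^ 4 + X ^ 3 + X ^ 2 + X + 1 ∧
      (↑(l₁.map Polynomial.natDegree) : Multiset ℕ) = {1, 4} ∧
      (↑(l₂.map Polynomial.natDegree) : Multiset ℕ) = {3, 2} ∧
      ({1, 4} : Multiset ℕ) ≠ {3, 2} := by
  refine ⟨by ring, irr1, irr4, irr3, irr2, [X + 1, X ^ 4 + X ^ 2 + 1],
    [X ^ 3 + 1, X ^ 2 + X + 1], ?_, ?_, ?_, ?_, ?_, ?_, by decide⟩
  · simp [irr1, irr4]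
  · simp [irr3, irr2]
  · simp only [List.prod_cons, List.prod_nil]; ring
  · simp only [List.prod_cons, List.prod_nil]; ring
  · simp only [List.map_cons, List.map_nil, deg1, deg4]; rfl
  · simp only [List.map_cons, List.map_nil, deg3, deg2]; rfl
end

section
/- In the polynomial semiring over the tropical semiring Tropical(WithTop ℝ), the identity (T + 1)(T^2 + 1) = (T + 1)^3 holds, and both T + 1 and T^2 + 1 are irreducible; hence the tropical polynomial semiring does not satisfy unique factorization, since the two factorizations consist of irreducibles with different multisets of degrees {1,2} and {1,1,1}. -/
open Polynomial

theorem trop_add_self (a : Tropical (WithTop ℝ)) : a + a = a := Tropical.add_self a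

theorem trop_poly_add_self (p : (Tropical (WithTop ℝ))[X]) : p + p = p := by
  ext n
  rw [coeff_add, trop_add_self]

theorem trop_isUnit (a : Tropical (WithTop ℝ)) (h : a ≠ 0) : IsUnit a := by
  have h' : Tropical.untrop a ≠ ⊤ := fun h2 => h (Tropical.untrop_injective h2)
  obtain ⟨r, hr⟩ := WithTop.ne_top_iff_exists.mp h'
  refine IsUnit.of_mul_eq_one (Tropical.trop ((-r : ℝ) : WithTop ℝ)) ?_
  apply Tropical.untrop_injective
  rw [Tropical.untrop_mul, ← hr, Tropical.untrop_trop, ← WithTop.coe_add]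
  simp

theorem trop_poly_unit (p : (Tropical (WithTop ℝ))[X]) (h : p ≠ 0) (hd : p.natDegree = 0) :
    IsUnit p := by
  rw [eq_C_of_natDegree_eq_zero hd] at h ⊢
  exact (trop_isUnit _ (fun h0 => h (by rw [h0, C_0]))).map C

theorem trop_one_ne : (1 : Tropical (WithTop ℝ)) ≠ 0 := one_ne_zero

theorem trop_deg (n : ℕ) :
    ((X : (Tropical (WithTop ℝ))[X]) ^ n + 1).natDegree = n := by
  have := natDegree_X_pow_add_C (R := Tropical (WithTop ℝ)) (n := n) (r := 1)
  simpa using this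

theorem trop_not_unit (n : ℕ) (hn : n ≠ 0) :
    ¬ IsUnit ((X : (Tropical (WithTop ℝ))[X]) ^ n + 1) := by
  intro h
  obtain ⟨q, hq⟩ := h.exists_right_inv
  have h1 := congrArg natDegree hq
  have hq0 : q ≠ 0 := by
    rintro rfl
    simp at hq
  have hp0 : (X : (Tropical (WithTop ℝ))[X]) ^ n + 1 ≠ 0 := by
    intro h0
    rw [h0] at hq
    simp at hq
  rw [natDegree_mul hp0 hq0, trop_deg, natDegree_one] at h1
  omega

theorem trop_factor (n : ℕ) (hn : n ≠ 0) {p q : (Tropical (WithTop ℝ))[X]}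
    (h : X ^ n + 1 = p * q) : p ≠ 0 ∧ q ≠ 0 ∧ p.natDegree + q.natDegree = n := by
  have h1 : (X ^ n + 1 : (Tropical (WithTop ℝ))[X]) ≠ 0 := by
    intro h0
    have := trop_deg n
    rw [h0, natDegree_zero] at this
    omega
  have hp : p ≠ 0 := by rintro rfl; simp [h] at h1
  have hq : q ≠ 0 := by rintro rfl; simp [h] at h1
  refine ⟨hp, hq, ?_⟩
  rw [← natDegree_mul hp hq, ← h, trop_deg]

theorem trop_irr1 : Irreducible ((X : (Tropical (WithTop ℝ))[X]) + 1) := by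
  rw [← pow_one (X : (Tropical (WithTop ℝ))[X])]
  refine ⟨trop_not_unit 1 one_ne_zero, fun p q h => ?_⟩
  obtain ⟨hp, hq, hd⟩ := trop_factor 1 one_ne_zero h
  rcases Nat.eq_zero_or_pos p.natDegree with h0 | h0
  · exact Or.inl (trop_poly_unit p hp h0)
  · exact Or.inr (trop_poly_unit q hq (by omega))

theorem trop_irr2 : Irreducible ((X : (Tropical (WithTop ℝ))[X]) ^ 2 + 1) := by
  refine ⟨trop_not_unit 2 two_ne_zero, fun p q h => ?_⟩
  obtain ⟨hp, hq, hd⟩ := trop_factor 2 two_ne_zero h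
  rcases Nat.eq_zero_or_pos p.natDegree with h0 | h0
  · exact Or.inl (trop_poly_unit p hp h0)
  rcases Nat.eq_zero_or_pos q.natDegree with h3 | h3
  · exact Or.inr (trop_poly_unit q hq h3)
  exfalso
  have hp1 : p.natDegree = 1 := by omega
  have hq1 : q.natDegree = 1 := by omega
  have ha : p.coeff 1 ≠ 0 := by
    rw [← hp1]; exact leadingCoeff_ne_zero.mpr hp
  have c0 := congrArg (fun r => coeff r 0) h
  have c1 := congrArg (fun r => coeff r 1) h
  simp only [mul_coeff_zero, mul_coeff_one, coeff_add, coeff_X_pow, coeff_one] at c0 c1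
  norm_num at c0 c1
  have c1' := c1.symm
  rw [Tropical.add_eq_zero_iff] at c1'
  have hq0 : q.coeff 0 = 0 := (mul_eq_zero.mp c1'.2).resolve_left ha
  rw [hq0, mul_zero] at c0
  exact trop_one_ne c0

theorem trop_identity :
    ((X : (Tropical (WithTop ℝ))[X]) + 1) * (X ^ 2 + 1) = (X + 1) ^ 3 := by
  have e : ((X : (Tropical (WithTop ℝ))[X]) + 1) ^ 3
      = X ^ 3 + (X ^ 2 + X ^ 2 + X ^ 2) + (X + X + X) + 1 := by ring
  rw [e]
  simp only [trop_poly_add_self]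
  ring

/-- In the polynomial semiring over the tropical semiring `Tropical (WithTop ℝ)`
the identity `(T + 1)(T² + 1) = (T + 1)³` holds with both `T + 1` and `T² + 1`
irreducible; hence the tropical polynomial semiring does not satisfy unique
factorization, the multisets of degrees `{1, 2}` and `{1, 1, 1}` being
different. -/
theorem tropical_polynomial_not_UFD :
    ((X : (Tropical (WithTop ℝ))[X]) + 1) * (X ^ 2 + 1) = (X + 1) ^ 3 ∧
    Irreducible ((X : (Tropical (WithTop ℝ))[X]) + 1) ∧
    Irreducible ((X : (Tropical (WithTop ℝ))[X]) ^ 2 + 1) ∧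
    ∃ l₁ l₂ : List (Tropical (WithTop ℝ))[X],
      (∀ p ∈ l₁, Irreducible p) ∧ (∀ p ∈ l₂, Irreducible p) ∧
      l₁.prod = ((X : (Tropical (WithTop ℝ))[X]) + 1) * (X ^ 2 + 1) ∧
      l₂.prod = ((X : (Tropical (WithTop ℝ))[X]) + 1) * (X ^ 2 + 1) ∧
      (↑(l₁.map Polynomial.natDegree) : Multiset ℕ) = {1, 2} ∧
      (↑(l₂.map Polynomial.natDegree) : Multiset ℕ) = {1, 1, 1} ∧
      ({1, 2} : Multiset ℕ) ≠ {1, 1, 1} := by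
  have d1 : ((X : (Tropical (WithTop ℝ))[X]) + 1).natDegree = 1 := by
    simpa using trop_deg 1
  refine ⟨trop_identity, trop_irr1, trop_irr2, [X + 1, X ^ 2 + 1], [X + 1, X + 1, X + 1],
    ?_, ?_, ?_, ?_, ?_, ?_, by decide⟩
  · intro p hp
    simp only [List.mem_cons, List.not_mem_nil, or_false] at hp
    rcases hp with rfl | rfl
    exacts [trop_irr1, trop_irr2]
  · intro p hp
    simp only [List.mem_cons, List.not_mem_nil, or_false, or_self] at hp
    rw [hp]
    exact trop_irr1
  · simp
  · rw [trop_identity]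
    simp [pow_succ, mul_assoc]
  · simp only [List.map, d1, trop_deg]
    rfl
  · simp only [List.map, d1]
    rfl
end
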